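/- Let A′ and B′ be tuples of complex numbers, α̂ and β̂ complex numbers, and p a prime. Then for every integer r ≥ 1, τ_{B′}(p^r) τ_{A′∪{−β̂}}(p^r) + τ_{A′}(p^r) τ_{B′∪{−α̂}}(p^r) − τ_{A′}(p^r) τ_{B′}(p^r) = τ_{A′∪{−β̂}}(p^r) τ_{B′∪{−α̂}}(p^r) − p^{α̂+β̂} τ_{A′∪{−β̂}}(p^{r−1}) τ_{B′∪{−α̂}}(p^{r−1}). -/

import Mathlib

open Complex

/-- Shifted divisor function: `tauSh A n = ∑_{n₁⋯n_k = n} n₁^{-α₁}⋯n_k^{-α_k}`,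
defined by iterated Dirichlet convolution. -/
noncomputable def tauSh : List ℂ → ℕ → ℂ
  | [], n => if n = 1 then 1 else 0
  | a :: A, n => ∑ d ∈ n.divisors, (d : ℂ) ^ (-a) * tauSh A (n / d)

/-- `g_A(s,q) = ∏_{p ∣ q} ( ∏_{α∈A} (1 − p^{−s−α}) · ∑_{j≥0} τ_A(p^{j+q_p}) p^{−js} )`. -/
noncomputable def gSh (A : List ℂ) (s : ℂ) (q : ℕ) : ℂ :=
  ∏ p ∈ q.primeFactors,
    ((A.map (fun α => 1 - (p : ℂ) ^ (-s - α))).prod *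
      ∑' j : ℕ, tauSh A (p ^ (j + q.factorization p)) * (p : ℂ) ^ (-(j : ℂ) * s))

/-- `G_A(s,q) = ∑_{d∣q} (μ(d)/φ(d)) d^s ∑_{e∣d} (μ(e)/e^s) g_A(s, qe/d)`. -/
noncomputable def GSh (A : List ℂ) (s : ℂ) (q : ℕ) : ℂ :=
  ∑ d ∈ q.divisors, ((ArithmeticFunction.moebius d : ℂ) / (Nat.totient d : ℂ)) * (d : ℂ) ^ s *
    ∑ e ∈ d.divisors, (ArithmeticFunction.moebius e : ℂ) / (e : ℂ) ^ s * gSh A s (q * e / d)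

theorem tauSh_one_aux (A : List ℂ) : tauSh A 1 = 1 := by
  induction A with
  | nil => simp [tauSh]
  | cons a A ih => simp [tauSh, ih]

theorem tauSh_cons_pow_aux (a : ℂ) (A : List ℂ) (p : ℕ) (hp : p.Prime) (r : ℕ) :
    tauSh (a :: A) (p ^ r) =
      ∑ i ∈ Finset.range (r + 1), ((p ^ i : ℕ) : ℂ) ^ (-a) * tauSh A (p ^ (r - i)) := by
  rw [tauSh, Nat.sum_divisors_prime_pow hp]
  refine Finset.sum_congr rfl fun i hi => ?_
  rw [Nat.pow_div (by simpa [Nat.lt_succ_iff] using hi) hp.pos]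

theorem tauSh_append_aux (A : List ℂ) (c : ℂ) (p : ℕ) (hp : p.Prime) (r : ℕ) :
    tauSh (A ++ [c]) (p ^ (r + 1)) =
      tauSh A (p ^ (r + 1)) + (p : ℂ) ^ (-c) * tauSh (A ++ [c]) (p ^ r) := by
  induction A generalizing r with
  | nil =>
    have key : ∀ r, tauSh [c] (p ^ r) = ((p ^ r : ℕ) : ℂ) ^ (-c) := by
      intro r
      rw [tauSh_cons_pow_aux c [] p hp, Finset.sum_eq_single r]
      · simp [tauSh]
      · intro i hi hne
        have h1 : i < r + 1 := Finset.mem_range.mp hi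
        have : r - i ≠ 0 := by omega
        simp [tauSh, hp.ne_one, this]
      · simp
    have h0 : tauSh [] (p ^ (r + 1)) = 0 := by simp [tauSh, hp.ne_one]
    rw [List.nil_append, key, key, h0, pow_succ', Nat.cast_mul, Complex.natCast_mul_natCast_cpow]
    ring
  | cons a A ih =>
    rw [List.cons_append, tauSh_cons_pow_aux _ _ p hp, tauSh_cons_pow_aux _ _ p hp,
      tauSh_cons_pow_aux _ _ p hp, Finset.sum_range_succ,
      Finset.sum_range_succ (n := r + 1), Finset.mul_sum]
    have : ∀ i ∈ Finset.range (r + 1),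
        ((p ^ i : ℕ) : ℂ) ^ (-a) * tauSh (A ++ [c]) (p ^ (r + 1 - i)) =
        ((p ^ i : ℕ) : ℂ) ^ (-a) * tauSh A (p ^ (r + 1 - i)) +
        (p : ℂ) ^ (-c) * (((p ^ i : ℕ) : ℂ) ^ (-a) * tauSh (A ++ [c]) (p ^ (r - i))) := by
      intro i hi
      have h1 : i < r + 1 := Finset.mem_range.mp hi
      rw [show r + 1 - i = (r - i) + 1 by omega, ih]
      ring
    rw [Finset.sum_congr rfl this, Finset.sum_add_distrib]
    simp only [Nat.sub_self, pow_zero, tauSh_one_aux]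
    ring

/-- For tuples A′, B′, numbers α̂, β̂, a prime p and r ≥ 1,
τ_{B′}(p^r) τ_{A′∪{−β̂}}(p^r) + τ_{A′}(p^r) τ_{B′∪{−α̂}}(p^r) − τ_{A′}(p^r) τ_{B′}(p^r)
  = τ_{A′∪{−β̂}}(p^r) τ_{B′∪{−α̂}}(p^r) − p^{α̂+β̂} τ_{A′∪{−β̂}}(p^{r−1}) τ_{B′∪{−α̂}}(p^{r−1}). -/
theorem stmt12 (A' B' : List ℂ) (αh βh : ℂ) (p : ℕ) (hp : p.Prime) (r : ℕ) (hr : 1 ≤ r) :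
    tauSh B' (p ^ r) * tauSh (A' ++ [-βh]) (p ^ r)
        + tauSh A' (p ^ r) * tauSh (B' ++ [-αh]) (p ^ r)
        - tauSh A' (p ^ r) * tauSh B' (p ^ r)
      = tauSh (A' ++ [-βh]) (p ^ r) * tauSh (B' ++ [-αh]) (p ^ r)
        - (p : ℂ) ^ (αh + βh) *
            (tauSh (A' ++ [-βh]) (p ^ (r - 1)) * tauSh (B' ++ [-αh]) (p ^ (r - 1))) := by
  obtain ⟨k, rfl⟩ : ∃ k, r = k + 1 := ⟨r - 1, by omega⟩
  have hp0 : (p : ℂ) ≠ 0 := by exact_mod_cast hp.ne_zero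
  rw [Nat.add_sub_cancel, tauSh_append_aux A' _ p hp, tauSh_append_aux B' _ p hp,
    Complex.cpow_add _ _ hp0, neg_neg, neg_neg]
  ring
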